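/- (Ellipticity in the massive incoming region) Let m₀ > 0. There exists ε* > 0 such that for every 0 < ε ≤ ε* there are constants c₁, c₂, c₃ > 0 with the following property: for every R ≥ 1, every sign σ ∈ {+1,−1}, and every (x,ξ) = ((t,y),(τ,η)) ∈ Ω⁰_{ε,R,m₀,in} with σt ≤ 0, one has στ ≤ −c₁|ξ|, σt < −c₂|x|, and |τ − σ√(|η|²+m₀²)| ≥ c₃(1+|ξ|). -/

import Mathlib

noncomputable section

open scoped RealInnerProductSpace

/-- **Ellipticity in the massive incoming region.**
Writing points of `ℝ^{n+1}` as `x = (t,y) ∈ ℝ × ℝⁿ` and dual variables as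
`ξ = (τ,η) ∈ ℝ × ℝⁿ`, with `p₀(ξ) = −τ² + |η|²`, `ξ̃ = (−τ,η)` and
`cos(x,ξ̃) = x·ξ̃/(|x||ξ̃|)` (noting `|ξ̃| = |ξ|`): for `m₀ > 0` there is `ε* > 0` such
that for every `0 < ε ≤ ε*` there are `c₁, c₂, c₃ > 0` with the property that for every
`R ≥ 1`, every sign `σ ∈ {1,−1}` and every `(x,ξ) ∈ Ω⁰_{ε,R,m₀,in}` with `σt ≤ 0`:
`στ ≤ −c₁|ξ|`, `σt < −c₂|x|`, and `|τ − σ√(|η|²+m₀²)| ≥ c₃(1+|ξ|)`. -/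
theorem massive_incoming_ellipticity
    (n : ℕ) (hn : 1 ≤ n) (m₀ : ℝ) (hm₀ : 0 < m₀) :
    ∃ εstar > (0 : ℝ), ∀ ε : ℝ, 0 < ε → ε ≤ εstar →
      ∃ c₁ > (0 : ℝ), ∃ c₂ > (0 : ℝ), ∃ c₃ > (0 : ℝ),
        ∀ R : ℝ, 1 ≤ R → ∀ σ : ℝ, (σ = 1 ∨ σ = -1) →
          ∀ (t τ : ℝ) (y η : EuclideanSpace ℝ (Fin n)),
            R ≤ Real.sqrt (t ^ 2 + ‖y‖ ^ 2) →
            ¬(τ = 0 ∧ η = 0) →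
            (-(t * τ) + ⟪y, η⟫) /
                (Real.sqrt (t ^ 2 + ‖y‖ ^ 2) * Real.sqrt (τ ^ 2 + ‖η‖ ^ 2)) < -1 + ε →
            |(-τ ^ 2 + ‖η‖ ^ 2) + m₀ ^ 2| < ε * (τ ^ 2 + ‖η‖ ^ 2) →
            σ * t ≤ 0 →
            σ * τ ≤ -c₁ * Real.sqrt (τ ^ 2 + ‖η‖ ^ 2) ∧
            σ * t < -c₂ * Real.sqrt (t ^ 2 + ‖y‖ ^ 2) ∧
            c₃ * (1 + Real.sqrt (τ ^ 2 + ‖η‖ ^ 2)) ≤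
              |τ - σ * Real.sqrt (‖η‖ ^ 2 + m₀ ^ 2)| := by
  refine ⟨1/100, by norm_num, fun ε hε hε1 => ⟨1/2, by norm_num, 1/2, by norm_num,
    min (1/2) m₀, lt_min (by norm_num) hm₀, ?_⟩⟩
  intro R hR σ hσ t τ y η hX hξ hcos hp ht
  have hσ2 : σ ^ 2 = 1 := by rcases hσ with rfl | rfl <;> norm_num
  have hXX : Real.sqrt (t ^ 2 + ‖y‖ ^ 2) ^ 2 = t ^ 2 + ‖y‖ ^ 2 := Real.sq_sqrt (by positivity)
  have hΞΞ : Real.sqrt (τ ^ 2 + ‖η‖ ^ 2) ^ 2 = τ ^ 2 + ‖η‖ ^ 2 := Real.sq_sqrt (by positivity)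
  have hpos : 0 < τ ^ 2 + ‖η‖ ^ 2 := by
    by_cases h : τ = 0
    · have h2 : η ≠ 0 := fun h' => hξ ⟨h, h'⟩
      have := norm_pos_iff.mpr h2
      positivity
    · positivity
  have hΞ0 : 0 < Real.sqrt (τ ^ 2 + ‖η‖ ^ 2) := Real.sqrt_pos.mpr hpos
  have hE : m₀ ≤ Real.sqrt (‖η‖ ^ 2 + m₀ ^ 2) := Real.le_sqrt_of_sq_le (by nlinarith [sq_nonneg ‖η‖])
  generalize Real.sqrt (t ^ 2 + ‖y‖ ^ 2) = X at *
  generalize Real.sqrt (τ ^ 2 + ‖η‖ ^ 2) = Ξ at *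
  generalize Real.sqrt (‖η‖ ^ 2 + m₀ ^ 2) = E at *
  have hX0 : 0 < X := by linarith
  have hXΞ : 0 < X * Ξ := mul_pos hX0 hΞ0
  rw [div_lt_iff₀ hXΞ] at hcos
  have hexp : ‖Ξ • y + X • η‖ ^ 2 = Ξ ^ 2 * ‖y‖ ^ 2 + 2 * (X * Ξ) * ⟪y, η⟫ + X ^ 2 * ‖η‖ ^ 2 := by
    rw [norm_add_sq_real, norm_smul, norm_smul, real_inner_smul_left, real_inner_smul_right,
      mul_pow, mul_pow, Real.norm_eq_abs, Real.norm_eq_abs, sq_abs, sq_abs]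
    ring
  have hεb : ε * (X * Ξ) ≤ 1/100 * (X * Ξ) := mul_le_mul_of_nonneg_right hε1 hXΞ.le
  have hcos' : -(t * τ) + ⟪y, η⟫ < -(99/100) * (X * Ξ) := by linarith
  have hkey : (t * Ξ - τ * X) ^ 2 ≤ (3/20 * (X * Ξ)) ^ 2 := by
    have h1 : (t * Ξ - τ * X) ^ 2 + ‖Ξ • y + X • η‖ ^ 2
        = 2 * (X * Ξ) ^ 2 + 2 * (X * Ξ) * (-(t * τ) + ⟪y, η⟫) := by
      rw [hexp]
      linear_combination (-Ξ ^ 2) * hXX - X ^ 2 * hΞΞ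
    have h2 := mul_lt_mul_of_pos_left hcos' hXΞ
    linarith [sq_nonneg ‖Ξ • y + X • η‖, sq_nonneg (X * Ξ)]
  have hτ : (7/10 * Ξ) ^ 2 ≤ (σ * τ) ^ 2 := by
    have h1 := (abs_lt.mp hp).1
    have h2 : ε * (τ ^ 2 + ‖η‖ ^ 2) ≤ 1/100 * (τ ^ 2 + ‖η‖ ^ 2) :=
      mul_le_mul_of_nonneg_right hε1 hpos.le
    rw [mul_pow, mul_pow, hσ2, hΞΞ]
    have h3 : ‖η‖ ^ 2 ≤ 1/100 * (τ ^ 2 + ‖η‖ ^ 2) + τ ^ 2 := by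
      have h4 := (abs_lt.mp hp).2
      linarith [sq_nonneg m₀]
    linarith [sq_nonneg τ, sq_nonneg m₀]
  have hk2 : ((σ * t) * Ξ - (σ * τ) * X) ^ 2 ≤ (3/20 * (X * Ξ)) ^ 2 := by
    calc _ = σ ^ 2 * (t * Ξ - τ * X) ^ 2 := by ring
      _ ≤ _ := by rw [hσ2, one_mul]; exact hkey
  have hab : |τ - σ * E| = |σ * τ - E| := by
    rcases hσ with rfl | rfl
    · simp
    · rw [← abs_neg]; congr 1; ring
  rw [hab]
  generalize σ * t = s at *
  generalize σ * τ = w at *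
  have hk3 := abs_le.mp (abs_le_of_sq_le_sq hk2 (by positivity))
  have hw : w ≤ -(7/10 * Ξ) := by
    have h := sq_le_sq.mp hτ
    rcases le_total 0 w with h0 | h0
    · rw [abs_of_nonneg h0, abs_of_nonneg (by positivity)] at h
      exfalso
      linarith [mul_le_mul_of_nonneg_right h hX0.le, mul_nonneg (neg_nonneg.mpr ht) hΞ0.le]
    · rw [abs_of_nonpos h0, abs_of_nonneg (by positivity)] at h
      linarith
  refine ⟨by linarith, ?_, ?_⟩
  · have h1 := mul_le_mul_of_nonneg_right hw hX0.le
    have h2 : s * Ξ < (-(1/2) * X) * Ξ := by linarith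
    exact lt_of_mul_lt_mul_right h2 hΞ0.le
  · rw [abs_of_nonpos (by linarith)]
    have h1 : min (1/2) m₀ * Ξ ≤ 1/2 * Ξ := mul_le_mul_of_nonneg_right (min_le_left _ _) hΞ0.le
    have h2 : min (1/2) m₀ ≤ m₀ := min_le_right _ _
    linarith

end
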